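/- arXiv:1905.11817 — 5 statements merged into one kernel-verified Lean document; each statement's English description precedes it below -/
import Mathlib

section
/- Let k ≥ 8 be an integer, let α = 1 − 1/log(k), and let F : ℝ^k → ℝ be defined by F(x) = (1/(α(1−α))) Σ_{i=1}^k x_i^α. Then for all x, y in the probability simplex Δ_k, F(x) − F(y) ≤ 2e·log(k). -/
/-!
Write `L = log k`, so `1 - α = 1 / L` and `k ^ (1 - α) = e`. Weighted AM-GM gives
`x i ^ α * (1 / k) ^ (1 - α) ≤ α * x i + (1 - α) / k`; summing over `i` yields
`∑ i, x i ^ α ≤ k ^ (1 - α) = e`. Since `k ≥ 8 > e ^ 2`, we have `L ≥ 2`, hence `α ≥ 1 / 2` and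
`1 / (α (1 - α)) = L / α ≤ 2 L`. The sum over `y` is nonnegative and can be dropped.
-/

/-- For `k ≥ 8` and `α = 1 - 1/log k`, the diameter of the probability simplex
with respect to the potential `F(x) = (1/(α(1-α))) ∑ i, (x i)^α` is at most
`2 e log k`. -/
theorem stmt3 (k : ℕ) (hk : 8 ≤ k) (α : ℝ) (hα : α = 1 - 1 / Real.log k)
    (x y : Fin k → ℝ)
    (hx : ∀ i, 0 ≤ x i) (hxs : ∑ i, x i = 1)
    (hy : ∀ i, 0 ≤ y i) (hys : ∑ i, y i = 1) :
    (1 / (α * (1 - α))) * (∑ i, x i ^ α) - (1 / (α * (1 - α))) * (∑ i, y i ^ α)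
      ≤ 2 * Real.exp 1 * Real.log k := by
  have hk8 : (8 : ℝ) ≤ k := by exact_mod_cast hk
  have hk0 : (0 : ℝ) < k := by linarith
  have hL : 2 ≤ Real.log k := by
    have h1 : Real.log 8 ≤ Real.log k := Real.log_le_log (by norm_num) hk8
    have h2 : Real.log 8 = 3 * Real.log 2 := by
      rw [show (8 : ℝ) = 2 ^ 3 by norm_num, Real.log_pow]; norm_num
    have h3 := Real.log_two_gt_d9
    linarith
  set L := Real.log k with hLdef
  have hL0 : 0 < L := by linarith
  have hα1 : 1 - α = 1 / L := by rw [hα]; ring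
  have hinv : 1 / L ≤ 1 / 2 := one_div_le_one_div_of_le (by norm_num) hL
  have hαhalf : 1 / 2 ≤ α := by linarith
  have hβ : 0 < 1 - α := by rw [hα1]; positivity
  have hpow : (1 / (k : ℝ)) ^ (1 - α) = Real.exp (-1) := by
    rw [Real.rpow_def_of_pos (by positivity), hα1, one_div, Real.log_inv, ← hLdef]
    congr 1
    field_simp
  have hsum : (∑ i, x i ^ α) * Real.exp (-1) ≤ 1 := by
    calc (∑ i, x i ^ α) * Real.exp (-1)
        = ∑ i, x i ^ α * (1 / (k : ℝ)) ^ (1 - α) := by rw [Finset.sum_mul, hpow]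
      _ ≤ ∑ i, (α * x i + (1 - α) * (1 / (k : ℝ))) :=
          Finset.sum_le_sum fun i _ =>
            Real.geom_mean_le_arith_mean2_weighted (by linarith) hβ.le (hx i)
              (by positivity) (by ring)
      _ = 1 := by
          rw [Finset.sum_add_distrib, ← Finset.mul_sum, hxs]
          simp only [Finset.sum_const, Finset.card_univ, Fintype.card_fin, nsmul_eq_mul]
          field_simp
          ring
  have hsx : ∑ i, x i ^ α ≤ Real.exp 1 := by
    rw [Real.exp_neg, ← div_eq_mul_inv, div_le_one (Real.exp_pos 1)] at hsum
    exact hsum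
  have hsx0 : 0 ≤ ∑ i, x i ^ α := Finset.sum_nonneg fun i _ => Real.rpow_nonneg (hx i) α
  have hsy0 : 0 ≤ ∑ i, y i ^ α := Finset.sum_nonneg fun i _ => Real.rpow_nonneg (hy i) α
  have hα0 : 0 < α := by linarith
  have hC0 : 0 ≤ 1 / (α * (1 - α)) := by positivity
  have hC : 1 / (α * (1 - α)) ≤ 2 * L := by
    rw [hα1, div_le_iff₀ (by positivity)]
    field_simp
    linarith
  calc _ ≤ (1 / (α * (1 - α))) * (∑ i, x i ^ α) := sub_le_self _ (mul_nonneg hC0 hsy0)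
    _ ≤ (2 * L) * Real.exp 1 := mul_le_mul hC hsx hsx0 (by positivity)
    _ = 2 * Real.exp 1 * L := by ring
end

section
/- Let k ≥ 1 be an integer, 0 < η ≤ 1/2, x ∈ (0,∞)^k with Σ_{i=1}^k x_i = 1, and ℓ ∈ [0,1]^k. Let A = {i ∈ [k] : x_i ≥ η²} and B = {i ∈ [k] : x_i < η²}. Then Σ_{i∈A} ((ℓ_i − 1/2)² / x_i) · (2 x_i^{3/2} + 48 η x_i) + Σ_{i∈B} ( (1/4)·(2 x_i^{3/2} + 48 η x_i) + 2 ℓ_i² x_i^{1/2} ) ≤ √k / 2 + 12 η k. -/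
/-!
Each arm contributes at most `√(x i) / 2 + 12 η`. On arms with `x i ≥ η²` this is just
`(ℓ i - 1/2)² ≤ 1/4`; on arms with `x i < η²` it holds that `√(x i) < η ≤ 1/2`, so the contribution
is at most a small multiple of `η`, well below `12 η`. Summing over the arms and using
`∑ √(x i) ≤ √k` (Cauchy-Schwarz with `∑ x i = 1`) gives the bound.
-/

open Finset

/-- Contribution of an arm with `x ≥ η²`, with `s = √x`. -/
lemma large_arm_le {η s l : ℝ} (hη : 0 < η) (hs : 0 < s) (h0 : 0 ≤ l) (h1 : l ≤ 1) :
    ((l - 1 / 2) ^ 2 / s ^ 2) * (2 * s ^ 3 + 48 * η * s ^ 2) ≤ s / 2 + 12 * η := by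
  have hl : (l - 1 / 2) ^ 2 ≤ 1 / 4 := by nlinarith
  have he : ((l - 1 / 2) ^ 2 / s ^ 2) * (2 * s ^ 3 + 48 * η * s ^ 2)
      = (l - 1 / 2) ^ 2 * (2 * s + 48 * η) := by
    field_simp
  rw [he]
  have := mul_le_mul_of_nonneg_right hl (show 0 ≤ 2 * s + 48 * η by positivity)
  linarith

/-- Contribution of an arm with `x < η²`, with `s = √x`. -/
lemma small_arm_le {η s l : ℝ} (hη : 0 < η) (hη2 : η ≤ 1 / 2) (hs : 0 < s) (hsη : s < η)
    (h0 : 0 ≤ l) (h1 : l ≤ 1) :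
    (1 / 4) * (2 * s ^ 3 + 48 * η * s ^ 2) + 2 * l ^ 2 * s ≤ s / 2 + 12 * η := by
  have hl : l ^ 2 ≤ 1 := by nlinarith
  have hls : l ^ 2 * s ≤ 1 * s := mul_le_mul_of_nonneg_right hl hs.le
  have hs2 : s ^ 2 ≤ 1 / 4 := by nlinarith
  have h2 : s ^ 2 * η ≤ 1 / 4 * η := mul_le_mul_of_nonneg_right hs2 hη.le
  have h3 : s ^ 2 * s ≤ 1 / 4 * s := mul_le_mul_of_nonneg_right hs2 hs.le
  nlinarith

/-- Cauchy-Schwarz on the simplex. -/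
lemma sum_sqrt_le_sqrt_card {k : ℕ} {x : Fin k → ℝ} (hx : ∀ i, 0 < x i)
    (hxs : ∑ i, x i = 1) : ∑ i, √(x i) ≤ √(k : ℝ) := by
  apply Real.le_sqrt_of_sq_le
  have h := sq_sum_le_card_mul_sum_sq (s := univ) (f := fun i => √(x i))
  simpa [Real.sq_sqrt (hx _).le, hxs] using h

/-- Stability estimate for OSMD with the 1/2-Tsallis potential and shifted
importance-weighted loss estimators: the stability coefficient is at most
`√k/2 + 12ηk`. -/
theorem stmt7 (k : ℕ) (hk : 1 ≤ k) (η : ℝ) (hη1 : 0 < η) (hη2 : η ≤ 1 / 2)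
    (x : Fin k → ℝ) (hx : ∀ i, 0 < x i) (hxs : ∑ i, x i = 1)
    (ℓ : Fin k → ℝ) (hℓ : ∀ i, ℓ i ∈ Set.Icc (0 : ℝ) 1) :
    (∑ i ∈ univ.filter fun i => η ^ 2 ≤ x i,
        ((ℓ i - 1 / 2) ^ 2 / x i) * (2 * x i ^ ((3 : ℝ) / 2) + 48 * η * x i))
      + (∑ i ∈ univ.filter fun i => x i < η ^ 2,
        ((1 / 4) * (2 * x i ^ ((3 : ℝ) / 2) + 48 * η * x i)
          + 2 * ℓ i ^ 2 * x i ^ ((1 : ℝ) / 2)))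
      ≤ Real.sqrt k / 2 + 12 * η * k := by
  have hpow3 : ∀ i, x i ^ ((3 : ℝ) / 2) = √(x i) ^ 3 := fun i => by
    rw [Real.sqrt_eq_rpow, ← Real.rpow_mul_natCast (hx i).le]
    norm_num
  have hA : ∀ i ∈ univ.filter fun i => η ^ 2 ≤ x i,
      ((ℓ i - 1 / 2) ^ 2 / x i) * (2 * x i ^ ((3 : ℝ) / 2) + 48 * η * x i)
        ≤ √(x i) / 2 + 12 * η := fun i _ => by
    have h := large_arm_le hη1 (Real.sqrt_pos.2 (hx i)) (hℓ i).1 (hℓ i).2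
    rw [Real.sq_sqrt (hx i).le] at h
    rwa [hpow3]
  have hB : ∀ i ∈ univ.filter fun i => x i < η ^ 2,
      (1 / 4) * (2 * x i ^ ((3 : ℝ) / 2) + 48 * η * x i) + 2 * ℓ i ^ 2 * x i ^ ((1 : ℝ) / 2)
        ≤ √(x i) / 2 + 12 * η := fun i hi => by
    have hlt : √(x i) < η := (Real.sqrt_lt' hη1).2 (mem_filter.1 hi).2
    have h := small_arm_le hη1 hη2 (Real.sqrt_pos.2 (hx i)) hlt (hℓ i).1 (hℓ i).2
    rw [Real.sq_sqrt (hx i).le] at h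
    rwa [hpow3, ← Real.sqrt_eq_rpow]
  have hsplit := sum_filter_add_sum_filter_not univ (fun i => η ^ 2 ≤ x i)
    (fun i => √(x i) / 2 + 12 * η)
  simp only [not_le] at hsplit
  have htot : ∑ i, (√(x i) / 2 + 12 * η) = (∑ i, √(x i)) / 2 + 12 * η * k := by
    rw [sum_add_distrib, sum_div, sum_const, card_univ, Fintype.card_fin, nsmul_eq_mul]
    ring
  have hcs := sum_sqrt_le_sqrt_card hx hxs
  have h1 := sum_le_sum hA
  have h2 := sum_le_sum hB
  linarith
end

section
/- Let p ∈ (1,2], q = p/(p−1), and d ≥ 1 an integer. Then for all ℓ, z ∈ ℝ^d with (Σ_{i=1}^d |ℓ_i|^q)^{1/q} ≤ 1 and (Σ_{i=1}^d |z_i|^p)^{1/p} ≤ 1, one has Σ_{i : |z_i| ≥ d^{1/(p−2)}} ℓ_i² |z_i|^{2−p} + Σ_{i : |z_i| < d^{1/(p−2)}} ℓ_i² / d ≤ 2. -/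
open Finset

/-!
Each of the two sums is at most `1`. With `w = 2 / q` and `v = (2 - p) / p`, which satisfy
`w + v = 1`, weighted AM-GM gives `ℓ² |z|^(2-p) = (|ℓ|^q)^w (|z|^p)^v ≤ w |ℓ|^q + v |z|^p` in each
coordinate, and summing over all coordinates bounds the first sum by `w + v = 1`. For the second
sum, `|ℓ i| ≤ 1` for every `i`, so each of its at most `d` terms is at most `1 / d`.
The thresholds only matter in that every index is used at most once in each sum.
-/

theorem young_coordinate {p q : ℝ} (hp1 : 1 < p) (hp2 : p ≤ 2) (hq : q = p / (p - 1)) (a b : ℝ) :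
    a ^ 2 * |b| ^ (2 - p) ≤ 2 / q * |a| ^ q + (2 - p) / p * |b| ^ p := by
  have hp0 : 0 < p := by linarith
  have hp1' : 0 < p - 1 := by linarith
  have hq0 : 0 < q := by rw [hq]; positivity
  have hsum : 2 / q + (2 - p) / p = 1 := by
    rw [hq]; field_simp; ring
  have h := Real.geom_mean_le_arith_mean2_weighted (w₁ := 2 / q) (w₂ := (2 - p) / p)
    (p₁ := |a| ^ q) (p₂ := |b| ^ p) (by positivity)
    (div_nonneg (by linarith) hp0.le) (by positivity) (by positivity) hsum
  rwa [← Real.rpow_mul (abs_nonneg a), ← Real.rpow_mul (abs_nonneg b),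
    mul_div_cancel₀ _ hq0.ne', mul_div_cancel₀ _ hp0.ne', Real.rpow_two, sq_abs] at h

theorem le_one_of_rpow_one_div_le_one {s r : ℝ} (hr : 0 < r)
    (h : s ^ (1 / r) ≤ 1) : s ≤ 1 := by
  by_contra hlt
  exact absurd h (not_le.mpr (Real.one_lt_rpow (not_le.mp hlt) (by positivity)))

/-- Stability bound for online mirror descent with the clipped potential on the
`ℓ_p`-ball: for `ℓ` in the unit `ℓ_q`-ball and `z` in the unit `ℓ_p`-ball,
`∑_{|z i| ≥ d^{1/(p-2)}} ℓ i ² |z i|^{2-p} + ∑_{|z i| < d^{1/(p-2)}} ℓ i ²/d ≤ 2`. -/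
theorem stmt9 (p : ℝ) (hp1 : 1 < p) (hp2 : p ≤ 2) (q : ℝ) (hq : q = p / (p - 1))
    (d : ℕ) (hd : 1 ≤ d) (ℓ z : Fin d → ℝ)
    (hℓ : (∑ i, |ℓ i| ^ q) ^ (1 / q) ≤ 1)
    (hz : (∑ i, |z i| ^ p) ^ (1 / p) ≤ 1) :
    (∑ i ∈ univ.filter fun i => (d : ℝ) ^ (1 / (p - 2)) ≤ |z i|,
        ℓ i ^ 2 * |z i| ^ (2 - p))
      + (∑ i ∈ univ.filter fun i => |z i| < (d : ℝ) ^ (1 / (p - 2)),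
        ℓ i ^ 2 / d)
      ≤ 2 := by
  have hp0 : 0 < p := by linarith
  have hp1' : 0 < p - 1 := by linarith
  have hq0 : 0 < q := by rw [hq]; positivity
  have hd0 : (0 : ℝ) < d := by exact_mod_cast hd
  have hL : ∑ i, |ℓ i| ^ q ≤ 1 :=
    le_one_of_rpow_one_div_le_one hq0 hℓ
  have hZ : ∑ i, |z i| ^ p ≤ 1 :=
    le_one_of_rpow_one_div_le_one hp0 hz
  have hsq : ∀ i, ℓ i ^ 2 ≤ 1 := by
    intro i
    have h1 : |ℓ i| ^ q ≤ 1 :=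
      (single_le_sum (f := fun i => |ℓ i| ^ q) (fun j _ => by positivity) (mem_univ i)).trans hL
    have h2 : |ℓ i| ≤ 1 := by
      by_contra hlt
      exact absurd h1 (not_le.mpr (Real.one_lt_rpow (not_le.mp hlt) hq0))
    exact (sq_le_one_iff_abs_le_one _).mpr h2
  have hfirst : (∑ i ∈ univ.filter fun i => (d : ℝ) ^ (1 / (p - 2)) ≤ |z i|,
      ℓ i ^ 2 * |z i| ^ (2 - p)) ≤ 1 := by
    calc _ ≤ ∑ i, ℓ i ^ 2 * |z i| ^ (2 - p) :=
          sum_le_sum_of_subset_of_nonneg (filter_subset _ _) fun i _ _ => by positivity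
      _ ≤ ∑ i, (2 / q * |ℓ i| ^ q + (2 - p) / p * |z i| ^ p) :=
          sum_le_sum fun i _ => young_coordinate hp1 hp2 hq (ℓ i) (z i)
      _ = 2 / q * ∑ i, |ℓ i| ^ q + (2 - p) / p * ∑ i, |z i| ^ p := by
          rw [sum_add_distrib, mul_sum, mul_sum]
      _ ≤ 2 / q * 1 + (2 - p) / p * 1 := by
          have hv : 0 ≤ (2 - p) / p := div_nonneg (by linarith) hp0.le
          gcongr
      _ = 1 := by rw [hq]; field_simp; ring
  have hsecond : (∑ i ∈ univ.filter fun i => |z i| < (d : ℝ) ^ (1 / (p - 2)),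
      ℓ i ^ 2 / d) ≤ 1 := by
    calc _ ≤ ∑ i, ℓ i ^ 2 / (d : ℝ) :=
          sum_le_sum_of_subset_of_nonneg (filter_subset _ _) fun i _ _ => by positivity
      _ ≤ ∑ _i : Fin d, 1 / (d : ℝ) :=
          sum_le_sum fun i _ => div_le_div_of_nonneg_right (hsq i) hd0.le
      _ = 1 := by
          rw [sum_const, card_univ, Fintype.card_fin, nsmul_eq_mul, mul_one_div_cancel hd0.ne']
  linarith
end

section
/- Let p ∈ (1,2) and d ≥ 1 an integer, and define h : ℝ → ℝ by h(x) = (d/2)x² if |x| ≤ d^{1/(p−2)}, and h(x) = ((p−2)/(p−1))·d^{(p−1)/(p−2)}·|x| + |x|^p/(p(p−1)) + ((2−p)/(2p))·d^{p/(p−2)} otherwise. Then h is convex and twice continuously differentiable on ℝ, with h''(x) = d whenever |x| ≤ d^{1/(p−2)} and h''(x) = |x|^{p−2} whenever |x| > d^{1/(p−2)}. -/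
/-!
Write `t = d^{1/(p-2)}`, so that `d = t^{p-2}` and the other two powers of `d` occurring in `h` are
`t^{p-1}` and `t^p`. The two branches of `h` then agree at `t` together with their first and second
derivatives, so `h' = hpotDeriv` and `h'' = max(|x|, t)^{p-2}` everywhere: `hasDerivAt_glue` handles
`x ≥ 0`, and `x < 0` follows since `h` is even and `h'` is odd. The second derivative is continuous
because `max(|x|, t) ≥ t > 0`, and it is nonnegative, which gives convexity.
-/


/-- The clipped coordinate potential for online linear optimisation over
`ℓ_p`-balls: the `p`-th power potential with second derivative clipped at `d`. -/
noncomputable def hpot (p : ℝ) (d : ℕ) (x : ℝ) : ℝ :=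
  if |x| ≤ (d : ℝ) ^ (1 / (p - 2)) then ((d : ℝ) / 2) * x ^ 2
  else ((p - 2) / (p - 1)) * (d : ℝ) ^ ((p - 1) / (p - 2)) * |x|
    + |x| ^ p / (p * (p - 1)) + ((2 - p) / (2 * p)) * (d : ℝ) ^ (p / (p - 2))

/-- The derivative of the clipped potential with threshold `t`. -/
noncomputable def hpotDeriv (p t x : ℝ) : ℝ :=
  if |x| ≤ t then t ^ (p - 2) * x
  else SignType.sign x * ((p - 2) / (p - 1) * t ^ (p - 1) + |x| ^ (p - 1) / (p - 1))

/-- Gluing of derivatives at the threshold, on the nonnegative half-line: `f` agrees with `f₁` on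
`[-t, t]` and with `f₂` on `[t, ∞)`, and at `x = t` both pieces have the same derivative. -/
lemma hasDerivAt_glue {f f₁ f₂ : ℝ → ℝ} {t x v : ℝ} (ht : 0 < t) (hx : 0 ≤ x)
    (hf₁ : ∀ y, |y| ≤ t → f y = f₁ y) (hf₂ : ∀ y, t ≤ y → f y = f₂ y)
    (h₁ : x ≤ t → HasDerivAt f₁ v x) (h₂ : t ≤ x → HasDerivAt f₂ v x) :
    HasDerivAt f v x := by
  rcases lt_trichotomy x t with h | h | h
  · refine (h₁ h.le).congr_of_eventuallyEq ?_
    filter_upwards [Ioo_mem_nhds (show -t < x by linarith) h] with y hy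
    exact hf₁ y (abs_le.2 ⟨hy.1.le, hy.2.le⟩)
  · subst h
    have hl : HasDerivWithinAt f v (Set.Icc (-x) x) x :=
      (h₁ le_rfl).hasDerivWithinAt.congr (fun y hy => hf₁ y (abs_le.2 hy))
        (hf₁ x (abs_of_pos ht).le)
    have hr : HasDerivWithinAt f v (Set.Ici x) x :=
      (h₂ le_rfl).hasDerivWithinAt.congr (fun y hy => hf₂ y hy) (hf₂ x le_rfl)
    refine (hl.union hr).hasDerivAt ?_
    filter_upwards [Ioi_mem_nhds (show -x < x by linarith)] with y hy
    rcases le_total y x with h | h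
    · exact Or.inl ⟨le_of_lt hy, h⟩
    · exact Or.inr h
  · refine (h₂ h.le).congr_of_eventuallyEq ?_
    filter_upwards [Ioi_mem_nhds h] with y hy
    exact hf₂ y (le_of_lt hy)

lemma hpotDeriv_of_abs_le {p t x : ℝ} (h : |x| ≤ t) : hpotDeriv p t x = t ^ (p - 2) * x :=
  if_pos h

lemma hpotDeriv_of_le {p t x : ℝ} (hp1 : 1 < p) (ht : 0 < t) (h : t ≤ x) :
    hpotDeriv p t x = (p - 2) / (p - 1) * t ^ (p - 1) + x ^ (p - 1) / (p - 1) := by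
  have hx : 0 < x := ht.trans_le h
  have hp : p - 1 ≠ 0 := by linarith
  unfold hpotDeriv
  rw [abs_of_pos hx, sign_pos hx]
  split_ifs with h'
  · obtain rfl : x = t := le_antisymm h' h
    have : x ^ (p - 1) = x ^ (p - 2) * x := by
      rw [← Real.rpow_add_one hx.ne']; congr 1; ring
    rw [this]; field_simp; ring
  · simp

lemma hpotDeriv_neg (p t x : ℝ) : hpotDeriv p t (-x) = -hpotDeriv p t x := by
  unfold hpotDeriv
  rw [abs_neg, Left.sign_neg]
  split_ifs <;> simp

lemma hasDerivAt_hpotDeriv {p t : ℝ} (hp1 : 1 < p) (ht : 0 < t) (x : ℝ) :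
    HasDerivAt (hpotDeriv p t) (max |x| t ^ (p - 2)) x := by
  have hp : p - 1 ≠ 0 := by linarith
  have key : ∀ x, 0 ≤ x → HasDerivAt (hpotDeriv p t) (max |x| t ^ (p - 2)) x := by
    intro x hx
    rw [abs_of_nonneg hx]
    refine hasDerivAt_glue ht hx (fun y hy => hpotDeriv_of_abs_le hy)
      (fun y hy => hpotDeriv_of_le hp1 ht hy) (fun h => ?_) (fun h => ?_)
    · rw [max_eq_right h]
      simpa using (hasDerivAt_id x).const_mul (t ^ (p - 2))
    · rw [max_eq_left h]
      have := ((Real.hasDerivAt_rpow_const (p := p - 1)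
        (Or.inl (ht.trans_le h).ne')).div_const (p - 1)).const_add
        ((p - 2) / (p - 1) * t ^ (p - 1))
      refine this.congr_deriv ?_
      rw [show p - 1 - 1 = p - 2 by ring]; field_simp
  rcases le_total 0 x with hx | hx
  · exact key x hx
  · have h := ((key (-x) (by linarith)).comp x (hasDerivAt_neg x)).neg
    rw [abs_neg] at h
    refine (h.congr_of_eventuallyEq (.of_forall fun y => ?_)).congr_deriv (by ring)
    simp [hpotDeriv_neg]

lemma hpot_neg (p : ℝ) (d : ℕ) (x : ℝ) : hpot p d (-x) = hpot p d x := by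
  simp [hpot]

lemma hasDerivAt_hpot {p : ℝ} (hp1 : 1 < p) (hp2 : p < 2) {d : ℕ} (hd : 1 ≤ d) (x : ℝ) :
    HasDerivAt (hpot p d) (hpotDeriv p ((d : ℝ) ^ (1 / (p - 2))) x) x := by
  have hd0 : (0 : ℝ) < d := by exact_mod_cast hd
  have hp : p - 1 ≠ 0 := by linarith
  have hp' : p - 2 ≠ 0 := by linarith
  have hp0 : p ≠ 0 := by linarith
  have e1 : (d : ℝ) ^ ((p - 1) / (p - 2)) = ((d : ℝ) ^ (1 / (p - 2))) ^ (p - 1) := by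
    rw [← Real.rpow_mul hd0.le]; congr 1; ring
  have e2 : (d : ℝ) ^ (p / (p - 2)) = ((d : ℝ) ^ (1 / (p - 2))) ^ p := by
    rw [← Real.rpow_mul hd0.le]; congr 1; ring
  have e0 : (d : ℝ) = ((d : ℝ) ^ (1 / (p - 2))) ^ (p - 2) := by
    rw [← Real.rpow_mul hd0.le, one_div_mul_cancel hp', Real.rpow_one]
  have ht : 0 < (d : ℝ) ^ (1 / (p - 2)) := Real.rpow_pos_of_pos hd0 _
  have hform : ∀ y, hpot p d y = if |y| ≤ (d : ℝ) ^ (1 / (p - 2)) then (d : ℝ) / 2 * y ^ 2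
      else ((p - 2) / (p - 1)) * (d : ℝ) ^ ((p - 1) / (p - 2)) * |y|
        + |y| ^ p / (p * (p - 1)) + ((2 - p) / (2 * p)) * (d : ℝ) ^ (p / (p - 2)) :=
    fun y => rfl
  rw [e1, e2] at hform
  generalize (d : ℝ) ^ (1 / (p - 2)) = t at *
  rw [e0] at hform
  have hf₁ : ∀ y, |y| ≤ t → hpot p d y = t ^ (p - 2) / 2 * y ^ 2 := fun y hy => by
    rw [hform, if_pos hy]
  have hf₂ : ∀ y, t ≤ y → hpot p d y = (p - 2) / (p - 1) * t ^ (p - 1) * y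
      + y ^ p / (p * (p - 1)) + (2 - p) / (2 * p) * t ^ p := by
    intro y hy
    have hy0 : 0 < y := ht.trans_le hy
    rw [hform, abs_of_pos hy0]
    split_ifs with h'
    · obtain rfl : y = t := le_antisymm h' hy
      have a1 : y ^ (p - 1) = y ^ (p - 2) * y := by
        rw [← Real.rpow_add_one hy0.ne']; congr 1; ring
      have a2 : y ^ p = y ^ (p - 2) * y * y := by
        rw [← a1, ← Real.rpow_add_one hy0.ne']; congr 1; ring
      rw [a2, a1]; field_simp; ring
    · rfl
  have key : ∀ x, 0 ≤ x → HasDerivAt (hpot p d) (hpotDeriv p t x) x := by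
    intro x hx
    refine hasDerivAt_glue ht hx hf₁ hf₂ (fun h => ?_) (fun h => ?_)
    · rw [hpotDeriv_of_abs_le (by rwa [abs_of_nonneg hx])]
      refine ((hasDerivAt_pow 2 x).const_mul (t ^ (p - 2) / 2)).congr_deriv ?_
      norm_num; ring
    · rw [hpotDeriv_of_le hp1 ht h]
      have := (((hasDerivAt_id x).const_mul ((p - 2) / (p - 1) * t ^ (p - 1))).add
        ((Real.hasDerivAt_rpow_const (p := p)
        (Or.inl (ht.trans_le h).ne')).div_const (p * (p - 1)))).add_const
        ((2 - p) / (2 * p) * t ^ p)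
      refine this.congr_deriv ?_
      field_simp
  rcases le_total 0 x with hx | hx
  · exact key x hx
  · have h := (key (-x) (by linarith)).comp x (hasDerivAt_neg x)
    refine (h.congr_of_eventuallyEq (.of_forall fun y => ?_)).congr_deriv ?_
    · simp [hpot_neg]
    · rw [hpotDeriv_neg]; ring

/-- The clipped potential `hpot p d` is convex and twice continuously
differentiable, with `h'' x = d` for `|x| ≤ d^{1/(p-2)}` and
`h'' x = |x|^{p-2}` for `|x| > d^{1/(p-2)}`. -/
theorem stmt10 (p : ℝ) (hp1 : 1 < p) (hp2 : p < 2) (d : ℕ) (hd : 1 ≤ d) :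
    ConvexOn ℝ Set.univ (hpot p d) ∧ ContDiff ℝ 2 (hpot p d) ∧
    (∀ x : ℝ, |x| ≤ (d : ℝ) ^ (1 / (p - 2)) →
      deriv (deriv (hpot p d)) x = d) ∧
    (∀ x : ℝ, (d : ℝ) ^ (1 / (p - 2)) < |x| →
      deriv (deriv (hpot p d)) x = |x| ^ (p - 2)) := by
  have hd0 : (0 : ℝ) < d := by exact_mod_cast hd
  have ht : 0 < (d : ℝ) ^ (1 / (p - 2)) := Real.rpow_pos_of_pos hd0 _
  have e0 : ((d : ℝ) ^ (1 / (p - 2))) ^ (p - 2) = d := by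
    rw [← Real.rpow_mul hd0.le, one_div_mul_cancel (by linarith), Real.rpow_one]
  have H1 : deriv (hpot p d) = hpotDeriv p ((d : ℝ) ^ (1 / (p - 2))) :=
    funext fun x => (hasDerivAt_hpot hp1 hp2 hd x).deriv
  have D1 : Differentiable ℝ (hpot p d) :=
    fun x => (hasDerivAt_hpot hp1 hp2 hd x).differentiableAt
  have H2 : deriv (deriv (hpot p d)) =
      fun x => max |x| ((d : ℝ) ^ (1 / (p - 2))) ^ (p - 2) := by
    rw [H1]; exact funext fun x => (hasDerivAt_hpotDeriv hp1 ht x).deriv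
  have D2 : Differentiable ℝ (deriv (hpot p d)) := by
    rw [H1]; exact fun x => (hasDerivAt_hpotDeriv hp1 ht x).differentiableAt
  refine ⟨?_, ?_, fun x hx => ?_, fun x hx => ?_⟩
  · refine convexOn_univ_of_deriv2_nonneg D1 D2 fun x => ?_
    change 0 ≤ deriv (deriv (hpot p d)) x
    rw [H2]
    positivity
  · rw [show (2 : WithTop ℕ∞) = 1 + 1 by norm_num, contDiff_succ_iff_deriv]
    refine ⟨D1, by simp, contDiff_one_iff_deriv.2 ⟨D2, ?_⟩⟩
    rw [H2]
    exact (continuous_abs.max continuous_const).rpow_const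
      fun x => Or.inl (lt_max_of_lt_right ht).ne'
  · rw [H2]; simp only [max_eq_right hx, e0]
  · rw [H2]; simp only [max_eq_left hx.le]
end

section
/- Let p ∈ (1,2) and d ≥ 1 an integer, and define h : ℝ → ℝ by h(x) = (d/2)x² if |x| ≤ d^{1/(p−2)}, and h(x) = ((p−2)/(p−1))·d^{(p−1)/(p−2)}·|x| + |x|^p/(p(p−1)) + ((2−p)/(2p))·d^{p/(p−2)} otherwise. Then for every x ∈ ℝ^d with Σ_{i=1}^d |x_i|^p ≤ 1, one has Σ_{i=1}^d h(x_i) ≤ 2/(p−1). -/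
/-- The clipped potential is at most the unclipped `p`-th power potential. -/
lemma hpot_le (p : ℝ) (hp1 : 1 < p) (hp2 : p < 2) (d : ℕ) (hd : 1 ≤ d) (x : ℝ) :
    hpot p d x ≤ |x| ^ p / (p * (p - 1)) := by
  have hd0 : (0 : ℝ) < d := by exact_mod_cast hd
  have hp0 : 0 < p := by linarith
  have hp1' : 0 < p - 1 := by linarith
  have hp2' : p - 2 ≠ 0 := by linarith
  have hpp : 0 < p * (p - 1) := mul_pos hp0 hp1'
  unfold hpot
  set τ : ℝ := (d : ℝ) ^ (1 / (p - 2)) with hτ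
  have hτ0 : 0 < τ := Real.rpow_pos_of_pos hd0 _
  have e0 : (d : ℝ) = τ ^ (p - 2) := by
    rw [hτ, ← Real.rpow_mul hd0.le, one_div_mul_cancel hp2', Real.rpow_one]
  have e1 : (d : ℝ) ^ ((p - 1) / (p - 2)) = τ ^ (p - 1) := by
    rw [hτ, ← Real.rpow_mul hd0.le]; congr 1; ring
  have e2 : (d : ℝ) ^ (p / (p - 2)) = τ ^ (p - 1) * τ := by
    rw [← Real.rpow_add_one hτ0.ne', hτ, ← Real.rpow_mul hd0.le]; congr 1; ring
  split_ifs with h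
  · rcases (abs_nonneg x).eq_or_lt with h0 | h0
    · have hx : x = 0 := abs_eq_zero.mp h0.symm
      subst hx
      simp [Real.zero_rpow hp0.ne']
    · -- `p - 2 < 0`, so `d = τ ^ (p - 2) ≤ |x| ^ (p - 2)`.
      have h1 : (d : ℝ) ≤ |x| ^ (p - 2) := by
        rw [e0]
        exact Real.rpow_le_rpow_of_nonpos h0 h (by linarith)
      have h2 : |x| ^ (p - 2) * x ^ 2 = |x| ^ p := by
        rw [← sq_abs x, ← Real.rpow_two, ← Real.rpow_add h0]; congr 1; ring
      have h3 : (d : ℝ) * x ^ 2 ≤ |x| ^ p := by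
        rw [← h2]; gcongr
      have h4 : 0 ≤ |x| ^ p := by positivity
      calc (d : ℝ) / 2 * x ^ 2 ≤ |x| ^ p / 2 := by linarith
        _ ≤ |x| ^ p / (p * (p - 1)) := by
          gcongr
          nlinarith
  · push Not at h
    rw [e1, e2]
    have hA : 0 < τ ^ (p - 1) := Real.rpow_pos_of_pos hτ0 _
    have hc : (2 - p) / (2 * p) ≤ (2 - p) / (p - 1) := by
      gcongr <;> linarith
    have hc0 : 0 ≤ (2 - p) / (p - 1) := div_nonneg (by linarith) hp1'.le
    have h1 : (2 - p) / (2 * p) * (τ ^ (p - 1) * τ)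
        ≤ (2 - p) / (p - 1) * (τ ^ (p - 1) * |x|) := by gcongr
    have h2 : (p - 2) / (p - 1) * τ ^ (p - 1) * |x|
        = -((2 - p) / (p - 1) * (τ ^ (p - 1) * |x|)) := by ring
    rw [h2]
    linarith

/-- Diameter bound for the unit `ℓ_p`-ball with respect to the clipped
potential: `∑ i, hpot p d (x i) ≤ 2/(p-1)` whenever `∑ i, |x i|^p ≤ 1`. -/
theorem stmt11 (p : ℝ) (hp1 : 1 < p) (hp2 : p < 2) (d : ℕ) (hd : 1 ≤ d)
    (x : Fin d → ℝ) (hx : ∑ i, |x i| ^ p ≤ 1) :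
    ∑ i, hpot p d (x i) ≤ 2 / (p - 1) := by
  have hp1' : 0 < p - 1 := by linarith
  calc ∑ i, hpot p d (x i) ≤ ∑ i, |x i| ^ p / (p * (p - 1)) :=
        Finset.sum_le_sum fun i _ => hpot_le p hp1 hp2 d hd (x i)
    _ = (∑ i, |x i| ^ p) / (p * (p - 1)) := by rw [Finset.sum_div]
    _ ≤ 2 / (p - 1) := by
      gcongr
      · linarith
      · nlinarith
end
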